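/- For every 1-Lipschitz function f : ℤ₊ → ℝ and every n ∈ ℤ₊, the first difference of the Stein solution satisfies |Δg_f(n)| ≤ min( 1/(β+1) + (α+2)/(α(α+2) + 2β(α+β+1)), 1/√α + 1/α ). -/

import Mathlib

/-!
Fix a state `N ≥ 1`, let `b i` be the death rate in state `i`, and split deviations at `N`:
`L u = ∑_{i < N} (u N - u i) π i` and `U u = ∑_{i > N} (u i - u N) π i`. Solving the Stein equation
by summation, and using that `b` has mean `α` under `π`, gives

  `α * b N * π N * (g (N + 1) - g N) = L f * U b - U f * L b`.

Comparing increments of `f` with increments of `b` on each side of `N` bounds the right-hand side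
by a multiple of `L b * U b`. That product is a function of `π N` and the mass below `N`, and
detailed balance with the two neighbours of `N` bounds it. What remains is an explicit inequality
in `α`, `β` and `N`.
-/

open Finset

/-- The part below `N` of the mean deviation of `u` from `u N`, with the sign that makes it
nonnegative for monotone `u`. -/
noncomputable def lowerDeviation (π u : ℕ → ℝ) (N : ℕ) : ℝ :=
  ∑ i ∈ range N, (u N - u i) * π i

/-- The part above `N` of the mean deviation of `u` from `u N`; the sum runs over the states
`i + (N + 1)`. -/
noncomputable def upperDeviation (π u : ℕ → ℝ) (N : ℕ) : ℝ :=
  ∑' i, (u (i + (N + 1)) - u N) * π (i + (N + 1))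

/-- `π` is the stationary distribution of the birth-death chain on `ℕ` with constant birth rate `α`
and death rates `b`, expressed through detailed balance. -/
structure IsImmigrationDeathLaw (α : ℝ) (b π : ℕ → ℝ) : Prop where
  birth_pos : 0 < α
  death_zero : b 0 = 0
  pos : ∀ k, 0 < π k
  hasSum : HasSum π 1
  balance : ∀ k, b (k + 1) * π (k + 1) = α * π k

section Deviation

variable {π u v : ℕ → ℝ} {N : ℕ} {μ A : ℝ}

theorem hasSum_sub_mul (hπ : HasSum π 1) (hu : HasSum (fun k ↦ u k * π k) μ) (c : ℝ) :
    HasSum (fun k ↦ (u k - c) * π k) (μ - c) := by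
  simpa only [sub_mul, mul_one] using hu.sub (hπ.mul_left c)

theorem upperDeviation_sub_lowerDeviation (hπ : HasSum π 1)
    (hu : HasSum (fun k ↦ u k * π k) μ) (N : ℕ) :
    upperDeviation π u N - lowerDeviation π u N = μ - u N := by
  have hw := hasSum_sub_mul hπ hu (u N)
  have hneg : lowerDeviation π u N = -∑ i ∈ range N, (u i - u N) * π i := by
    rw [lowerDeviation, ← sum_neg_distrib]
    exact sum_congr rfl fun i _ ↦ by ring
  rw [← hw.tsum_eq, ← hw.summable.sum_add_tsum_nat_add (N + 1), sum_range_succ, hneg,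
    upperDeviation]
  ring

theorem sum_sub_mul_eq_sub_lowerDeviation (π u : ℕ → ℝ) (N : ℕ) (c : ℝ) :
    ∑ i ∈ range N, (u i - c) * π i = (u N - c) * ∑ i ∈ range N, π i - lowerDeviation π u N := by
  rw [lowerDeviation, mul_sum, ← sum_sub_distrib]
  exact sum_congr rfl fun i _ ↦ by ring

theorem abs_lowerDeviation_le (hπ : ∀ k, 0 ≤ π k)
    (h : ∀ i < N, |u N - u i| ≤ A * (v N - v i)) :
    |lowerDeviation π u N| ≤ A * lowerDeviation π v N := by
  rw [lowerDeviation, lowerDeviation, mul_sum]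
  refine (abs_sum_le_sum_abs _ _).trans (sum_le_sum fun i hi ↦ ?_)
  rw [abs_mul, abs_of_nonneg (hπ i), ← mul_assoc]
  exact mul_le_mul_of_nonneg_right (h i (mem_range.1 hi)) (hπ i)

theorem abs_upperDeviation_le (hπ : ∀ k, 0 ≤ π k) (hπs : Summable π)
    (hv : Summable fun k ↦ v k * π k)
    (h : ∀ i, N < i → |u i - u N| ≤ A * (v i - v N)) :
    |upperDeviation π u N| ≤ A * upperDeviation π v N := by
  have hsum : Summable fun k ↦ (v k - v N) * π k := by
    simpa only [sub_mul] using hv.sub (hπs.mul_left (v N))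
  have htail := (((summable_nat_add_iff (N + 1)).2 hsum).hasSum).mul_left A
  rw [← Real.norm_eq_abs, upperDeviation, upperDeviation]
  refine tsum_of_norm_bounded htail fun i ↦ ?_
  rw [Real.norm_eq_abs, abs_mul, abs_of_nonneg (hπ _), ← mul_assoc]
  exact mul_le_mul_of_nonneg_right (h _ (by omega)) (hπ _)

theorem lowerDeviation_nonneg (hπ : ∀ k, 0 ≤ π k) (hu : Monotone u) :
    0 ≤ lowerDeviation π u N :=
  sum_nonneg fun i hi ↦ mul_nonneg (sub_nonneg.2 (hu (mem_range.1 hi).le)) (hπ i)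

theorem upperDeviation_nonneg (hπ : ∀ k, 0 ≤ π k) (hu : Monotone u) :
    0 ≤ upperDeviation π u N :=
  tsum_nonneg fun _ ↦ mul_nonneg (sub_nonneg.2 (hu (by omega))) (hπ _)

end Deviation

/-- The factor by which `lowerDeviation π b N * upperDeviation π b N` is bounded relative to
`α * b N * π N`, where `b` stands for `b N` and `d` for `b (N + 1) - b N`. -/
noncomputable def deviationRatio (α b d : ℝ) : ℝ :=
  b * (d + α) / ((α + b) * (b + d) + α ^ 2)

theorem mul_le_mul_deviationRatio {α b d F p : ℝ} (hα : 0 < α) (hb : 0 < b) (hd : 0 ≤ d)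
    (hF : b * p ≤ α * F) (hT : α * p ≤ (b + d) * (1 - (F + p)))
    (hP : 0 ≤ b * (F + p) - α * F) (hQ : 0 ≤ α * (1 - F) - b * (1 - (F + p))) :
    (b * (F + p) - α * F) * (α * (1 - F) - b * (1 - (F + p))) ≤
      α * b * p * deviationRatio α b d := by
  set P := b * (F + p) - α * F with hPdef
  set Q := α * (1 - F) - b * (1 - (F + p)) with hQdef
  set D := (α + b) * (b + d) + α ^ 2 with hD
  -- Comparing both factors with `W` uses one neighbour of the state at a time: `hF` for `P`, `hT`
  -- for `Q`.
  set W := α * (1 - F) + b * p with hW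
  have hPW : P * W ≤ b ^ 2 * p := by
    have gap : b ^ 2 * p - P * W = (α * F - b * p) * Q := by
      rw [hPdef, hQdef, hW]; ring
    linarith [gap, mul_nonneg (sub_nonneg.2 hF) hQ]
  have hQW : Q * D ≤ α * (d + α) * W := by
    have gap : α * (d + α) * W - Q * D = b ^ 2 * ((b + d) * (1 - (F + p)) - α * p) := by
      rw [hQdef, hD, hW]; ring
    linarith [gap, mul_nonneg (sq_nonneg b) (sub_nonneg.2 hT)]
  rw [deviationRatio, ← hD, mul_div_assoc', le_div_iff₀ (by positivity)]
  calc P * Q * D = P * (Q * D) := mul_assoc _ _ _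
    _ ≤ P * (α * (d + α) * W) := by gcongr
    _ = α * (d + α) * (P * W) := by ring
    _ ≤ α * (d + α) * (b ^ 2 * p) := by gcongr
    _ = α * b * p * (b * (d + α)) := by ring

namespace IsImmigrationDeathLaw

variable {α μ A B : ℝ} {b π f g : ℕ → ℝ} {N : ℕ}

theorem death_pos (h : IsImmigrationDeathLaw α b π) (hN : N ≠ 0) : 0 < b N := by
  obtain ⟨k, rfl⟩ := Nat.exists_eq_succ_of_ne_zero hN
  refine pos_of_mul_pos_left ?_ (h.pos (k + 1)).le
  rw [h.balance]
  exact mul_pos h.birth_pos (h.pos k)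

theorem hasSum_death (h : IsImmigrationDeathLaw α b π) : HasSum (fun k ↦ b k * π k) α := by
  rw [← hasSum_nat_add_iff' 1]
  simpa [h.balance, h.death_zero] using h.hasSum.mul_left α

theorem sum_death_mul (h : IsImmigrationDeathLaw α b π) (N : ℕ) :
    ∑ i ∈ range (N + 1), b i * π i = α * ∑ i ∈ range N, π i := by
  simp only [sum_range_succ', h.balance, h.death_zero, zero_mul, add_zero, mul_sum]

theorem lowerDeviation_death (h : IsImmigrationDeathLaw α b π) (N : ℕ) :
    lowerDeviation π b N = b N * ∑ i ∈ range (N + 1), π i - α * ∑ i ∈ range N, π i := by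
  rw [← h.sum_death_mul, lowerDeviation, sum_range_succ, sum_range_succ]
  simp only [sub_mul, sum_sub_distrib, ← mul_sum]
  ring

theorem upperDeviation_death (h : IsImmigrationDeathLaw α b π) (N : ℕ) :
    upperDeviation π b N =
      α * (1 - ∑ i ∈ range N, π i) - b N * (1 - ∑ i ∈ range (N + 1), π i) := by
  linear_combination
    upperDeviation_sub_lowerDeviation h.hasSum h.hasSum_death N + h.lowerDeviation_death N

theorem death_mul_le_mass_below (h : IsImmigrationDeathLaw α b π) (hN : N ≠ 0) :
    b N * π N ≤ α * ∑ i ∈ range N, π i := by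
  obtain ⟨k, rfl⟩ := Nat.exists_eq_succ_of_ne_zero hN
  rw [h.balance]
  exact mul_le_mul_of_nonneg_left
    (single_le_sum (fun i _ ↦ (h.pos i).le) (self_mem_range_succ k)) h.birth_pos.le

theorem birth_mul_le_mass_above (h : IsImmigrationDeathLaw α b π) (N : ℕ) :
    α * π N ≤ b (N + 1) * (1 - ∑ i ∈ range (N + 1), π i) := by
  rw [← h.balance]
  refine mul_le_mul_of_nonneg_left ?_ (h.death_pos N.succ_ne_zero).le
  rw [le_sub_iff_add_le', ← sum_range_succ]
  exact sum_le_hasSum _ (fun i _ ↦ (h.pos i).le) h.hasSum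

theorem lowerDeviation_mul_upperDeviation_le (h : IsImmigrationDeathLaw α b π) (hb : Monotone b)
    (hN : N ≠ 0) :
    lowerDeviation π b N * upperDeviation π b N ≤
      α * b N * π N * deviationRatio α (b N) (b (N + 1) - b N) := by
  have hP := lowerDeviation_nonneg (N := N) (fun k ↦ (h.pos k).le) hb
  have hQ := upperDeviation_nonneg (N := N) (fun k ↦ (h.pos k).le) hb
  have hT := h.birth_mul_le_mass_above N
  rw [h.lowerDeviation_death, sum_range_succ] at hP ⊢
  rw [h.upperDeviation_death, sum_range_succ] at hQ ⊢
  rw [sum_range_succ] at hT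
  exact mul_le_mul_deviationRatio h.birth_pos (h.death_pos hN) (sub_nonneg.2 (hb N.le_succ))
    (h.death_mul_le_mass_below hN) (by rwa [add_sub_cancel]) hP hQ

theorem death_mul_stein_solution (h : IsImmigrationDeathLaw α b π)
    (hg : ∀ k, α * g (k + 1) - b k * g k = f k - μ) (N : ℕ) :
    b N * π N * g N = ∑ i ∈ range N, (f i - μ) * π i := by
  induction N with
  | zero => simp [h.death_zero]
  | succ k ih =>
    rw [sum_range_succ, ← ih, h.balance]
    linear_combination π k * hg k

theorem stein_sub_eq (h : IsImmigrationDeathLaw α b π) (hμ : HasSum (fun k ↦ f k * π k) μ)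
    (hg : ∀ k, α * g (k + 1) - b k * g k = f k - μ) (N : ℕ) :
    α * b N * π N * (g (N + 1) - g N) =
      lowerDeviation π f N * upperDeviation π b N -
        upperDeviation π f N * lowerDeviation π b N := by
  have hgN := h.death_mul_stein_solution hg N
  have hgN' := h.death_mul_stein_solution hg (N + 1)
  have hmean := upperDeviation_sub_lowerDeviation h.hasSum hμ N
  rw [sum_sub_mul_eq_sub_lowerDeviation] at hgN
  rw [h.balance, sum_range_succ, sum_sub_mul_eq_sub_lowerDeviation] at hgN'
  rw [h.upperDeviation_death, h.lowerDeviation_death, sum_range_succ]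
  linear_combination b N * hgN' - α * hgN +
    (b N * (∑ i ∈ range N, π i + π N) - α * ∑ i ∈ range N, π i) * hmean

theorem abs_stein_sub_le (h : IsImmigrationDeathLaw α b π) (hb : Monotone b)
    (hμ : HasSum (fun k ↦ f k * π k) μ) (hg : ∀ k, α * g (k + 1) - b k * g k = f k - μ)
    (hN : N ≠ 0) (hA : 0 ≤ A) (hB : 0 ≤ B)
    (hlower : ∀ i < N, |f N - f i| ≤ A * (b N - b i))
    (hupper : ∀ i, N < i → |f i - f N| ≤ B * (b i - b N)) :
    |g (N + 1) - g N| ≤ (A + B) * deviationRatio α (b N) (b (N + 1) - b N) := by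
  have hπ : ∀ k, 0 ≤ π k := fun k ↦ (h.pos k).le
  have hP : 0 ≤ lowerDeviation π b N := lowerDeviation_nonneg hπ hb
  have hQ : 0 ≤ upperDeviation π b N := upperDeviation_nonneg hπ hb
  have hscale : 0 < α * b N * π N :=
    mul_pos (mul_pos h.birth_pos (h.death_pos hN)) (h.pos N)
  refine le_of_mul_le_mul_left ?_ hscale
  calc α * b N * π N * |g (N + 1) - g N|
      = |lowerDeviation π f N * upperDeviation π b N -
          upperDeviation π f N * lowerDeviation π b N| := by
        rw [← h.stein_sub_eq hμ hg, abs_mul, abs_of_pos hscale]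
    _ ≤ |lowerDeviation π f N| * upperDeviation π b N +
          |upperDeviation π f N| * lowerDeviation π b N := by
        refine (abs_sub _ _).trans_eq ?_
        rw [abs_mul, abs_mul, abs_of_nonneg hP, abs_of_nonneg hQ]
    _ ≤ A * lowerDeviation π b N * upperDeviation π b N +
          B * upperDeviation π b N * lowerDeviation π b N := by
        gcongr
        · exact abs_lowerDeviation_le hπ hlower
        · exact abs_upperDeviation_le hπ h.hasSum.summable h.hasSum_death.summable hupper
    _ = (A + B) * (lowerDeviation π b N * upperDeviation π b N) := by ring
    _ ≤ (A + B) * (α * b N * π N * deviationRatio α (b N) (b (N + 1) - b N)) :=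
        mul_le_mul_of_nonneg_left (h.lowerDeviation_mul_upperDeviation_le hb hN)
          (add_nonneg hA hB)
    _ = α * b N * π N * ((A + B) * deviationRatio α (b N) (b (N + 1) - b N)) := by ring

end IsImmigrationDeathLaw

section DeviationRatio

variable {α b c d x N β : ℝ}

theorem deviationRatio_le_div_add (hα : 0 < α) (hb : 0 < b) (hd : 0 ≤ d) :
    deviationRatio α b d ≤ b / (α + b) := by
  rw [deviationRatio, div_le_div_iff₀ (by positivity) (by positivity)]
  have hcube : 0 ≤ b ^ 3 := by positivity
  linarith

theorem mul_div_add_le_one_div_sqrt (hα : 0 < α) (hb : 0 < b) (hc : c ^ 2 * b ≤ 4) :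
    c * (b / (α + b)) ≤ 1 / √α := by
  rw [mul_div_assoc', div_le_div_iff₀ (by positivity) (by positivity), one_mul]
  refine le_of_sq_le_sq ?_ (by positivity)
  calc (c * b * √α) ^ 2 = c ^ 2 * b * (b * α) := by
        rw [mul_pow, Real.sq_sqrt hα.le]; ring
    _ ≤ 4 * (b * α) := by gcongr
    _ ≤ (α + b) ^ 2 := by linarith [sq_nonneg (α - b)]

theorem deviationRatio_mul_le_div_add (hα : 0 < α) (hx : 0 < x) (hxd : x ≤ d) (hN : 4 / 3 ≤ N) :
    deviationRatio α (N * x) d ≤ d / (x + d) := by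
  have hd : 0 < d := hx.trans_le hxd
  have : 0 < N := by linarith
  rw [deviationRatio, div_le_div_iff₀ (by positivity) (by positivity)]
  have hsq : 0 ≤ d * (α - N * x / 2) ^ 2 := by positivity
  have hcross : 0 ≤ α * N * x * (d - x) :=
    mul_nonneg (by positivity) (sub_nonneg.2 hxd)
  have hrest : 0 ≤ d * N * x ^ 2 * (3 * N / 4 - 1) :=
    mul_nonneg (by positivity) (by linarith)
  have hlast : 0 ≤ α * d ^ 2 := by positivity
  linarith

theorem add_mul_deviationRatio_le_one_div (hα : 0 < α) (hx : 0 < x) (hxd : x ≤ d)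
    (hN : 4 / 3 ≤ N) :
    (1 / x + 1 / d) * deviationRatio α (N * x) d ≤ 1 / x := by
  have hd : 0 < d := hx.trans_le hxd
  calc (1 / x + 1 / d) * deviationRatio α (N * x) d
      ≤ (1 / x + 1 / d) * (d / (x + d)) := by
        gcongr
        exact deviationRatio_mul_le_div_add hα hx hxd hN
    _ = 1 / x := by field_simp; ring

theorem mul_two_mul_add_sq_le (hN : 2 ≤ N) (hx : N - 1 ≤ x) :
    N * (2 * x + N + 1) ^ 2 ≤ 4 * x * (x + N + 1) ^ 2 := by
  obtain ⟨v, hv, rfl⟩ : ∃ v, 0 ≤ v ∧ N = v + 2 := ⟨N - 2, by linarith, by ring⟩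
  obtain ⟨u, hu, rfl⟩ : ∃ u, 0 ≤ u ∧ x = u + v + 1 := ⟨x - (v + 1), by linarith, by ring⟩
  rw [← sub_nonneg]
  ring_nf
  positivity

theorem add_mul_deviationRatio_le_one_div_sqrt (hα : 0 < α) (hN : 2 ≤ N) (hx : N - 1 ≤ x) :
    (1 / x + 1 / (x + N + 1)) * deviationRatio α (N * x) (x + N + 1) ≤ 1 / √α := by
  have hx0 : 0 < x := by linarith
  have : 0 < N := by linarith
  have hc : (1 / x + 1 / (x + N + 1)) ^ 2 * (N * x) ≤ 4 := by
    have hclear : (1 / x + 1 / (x + N + 1)) ^ 2 * (N * x) =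
        N * (2 * x + N + 1) ^ 2 / (x * (x + N + 1) ^ 2) := by
      field_simp
      ring
    rw [hclear, div_le_iff₀ (by positivity), ← mul_assoc]
    exact mul_two_mul_add_sq_le hN hx
  calc (1 / x + 1 / (x + N + 1)) * deviationRatio α (N * x) (x + N + 1)
      ≤ (1 / x + 1 / (x + N + 1)) * (N * x / (α + N * x)) := by
        gcongr
        exact deviationRatio_le_div_add hα (by positivity) (by positivity)
    _ ≤ 1 / √α := mul_div_add_le_one_div_sqrt hα (by positivity) hc

theorem add_mul_deviationRatio_one_le (hα : 0 < α) (hβ : 0 < β) :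
    (1 / β + 1 / (β + 2)) * deviationRatio α β (β + 2) ≤
      1 / (β + 1) + (α + 2) / (α * (α + 2) + 2 * β * (α + β + 1)) := by
  have hden : (α + β) * (β + (β + 2)) + α ^ 2 = α * (α + 2) + 2 * β * (α + β + 1) := by ring
  rw [deviationRatio, hden]
  set D := α * (α + 2) + 2 * β * (α + β + 1) with hD
  have hD0 : 0 < D := by positivity
  have hfirst : 2 * (α + β) / D ≤ 1 / (β + 1) := by
    rw [div_le_div_iff₀ hD0 (by positivity), hD]
    linarith [sq_nonneg α]
  calc (1 / β + 1 / (β + 2)) * (β * (β + 2 + α) / D)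
      = (2 * (β + 1) + α * (2 * (β + 1) / (β + 2))) / D := by field_simp; ring
    _ ≤ (2 * (β + 1) + α * 2) / D := by
        gcongr
        rw [div_le_iff₀ (by positivity)]
        linarith
    _ ≤ 2 * (α + β) / D + (α + 2) / D := by
        rw [← add_div]
        exact div_le_div_of_nonneg_right (by linarith) hD0.le
    _ ≤ 1 / (β + 1) + (α + 2) / D := by gcongr

theorem add_mul_deviationRatio_one_le_sqrt (hα : 0 < α) (hβ : 0 < β) :
    (1 / β + 1 / (β + 2)) * deviationRatio α β (β + 2) ≤ 1 / √α + 1 / α := by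
  have hc : (1 / (β + 2)) ^ 2 * β ≤ 4 := by
    rw [one_div_pow, one_div_mul_eq_div, div_le_iff₀ (by positivity)]
    nlinarith [sq_nonneg β]
  calc (1 / β + 1 / (β + 2)) * deviationRatio α β (β + 2)
      ≤ (1 / β + 1 / (β + 2)) * (β / (α + β)) := by
        gcongr
        exact deviationRatio_le_div_add hα hβ (by positivity)
    _ = 1 / (β + 2) * (β / (α + β)) + 1 / (α + β) := by field_simp; ring
    _ ≤ 1 / √α + 1 / α := by
        gcongr
        · exact mul_div_add_le_one_div_sqrt hα hβ hc
        · linarith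

end DeviationRatio

/-- The death rates of the polynomial birth-death distribution `PBD(α;0,β,1)`. -/
def pbdDeath (β : ℝ) (k : ℕ) : ℝ := β * k + k * (k - 1)

section PolynomialBirthDeath

variable {α β : ℝ} {f : ℕ → ℝ} {N i : ℕ}

theorem pbdDeath_eq_mul (β : ℝ) (N : ℕ) : pbdDeath β N = N * (β + N - 1) := by
  rw [pbdDeath]; ring

theorem pbdDeath_succ_sub (β : ℝ) (N : ℕ) : pbdDeath β (N + 1) - pbdDeath β N = β + 2 * N := by
  rw [pbdDeath, pbdDeath]; push_cast; ring

theorem monotone_pbdDeath (hβ : 0 ≤ β) : Monotone (pbdDeath β) :=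
  monotone_nat_of_le_succ fun N ↦ by
    rw [← sub_nonneg, pbdDeath_succ_sub]
    positivity

theorem mul_le_pbdDeath_sub_of_le (h : i ≤ N) :
    (N - i : ℝ) * (β + N - 1) ≤ pbdDeath β N - pbdDeath β i := by
  have gap : pbdDeath β N - pbdDeath β i = (N - i : ℝ) * (β + N - 1) + (N - i : ℝ) * i := by
    rw [pbdDeath, pbdDeath]; ring
  have hi : (0 : ℝ) ≤ (N - i : ℝ) * i :=
    mul_nonneg (sub_nonneg.2 (Nat.cast_le.2 h)) i.cast_nonneg
  linarith

theorem mul_le_pbdDeath_sub_of_lt (h : N < i) :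
    (i - N : ℝ) * (β + 2 * N) ≤ pbdDeath β i - pbdDeath β N := by
  have gap : pbdDeath β i - pbdDeath β N =
      (i - N : ℝ) * (β + 2 * N) + (i - N : ℝ) * (i - N - 1) := by
    rw [pbdDeath, pbdDeath]; ring
  have hi : (N : ℝ) + 1 ≤ i := by exact_mod_cast h
  have hprod : (0 : ℝ) ≤ (i - N : ℝ) * (i - N - 1) :=
    mul_nonneg (by linarith) (by linarith)
  linarith

theorem isImmigrationDeathLaw_pbd {C : ℝ} {π : ℕ → ℝ} (hα : 0 < α) (hβ : 0 < β) (hC : 0 < C)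
    (hπ : ∀ n : ℕ, π n =
      C * α ^ n / ∏ i ∈ range n, (β * ((i : ℝ) + 1) + ((i : ℝ) + 1) * (i : ℝ)))
    (hπ1 : ∑' n, π n = 1) :
    IsImmigrationDeathLaw α (pbdDeath β) π where
  birth_pos := hα
  death_zero := by simp [pbdDeath]
  pos k := by
    rw [hπ]
    exact div_pos (by positivity) (prod_pos fun i _ ↦ by positivity)
  hasSum := by
    have hs : Summable π := by
      by_contra h
      rw [tsum_eq_zero_of_not_summable h] at hπ1
      exact zero_ne_one hπ1
    exact hπ1 ▸ hs.hasSum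
  balance k := by
    have hdeath : pbdDeath β (k + 1) = β * (k + 1) + (k + 1) * k := by
      rw [pbdDeath]; push_cast; ring
    have hdeath0 : β * ((k : ℝ) + 1) + ((k : ℝ) + 1) * k ≠ 0 := by positivity
    rw [hπ, hπ, prod_range_succ, hdeath, pow_succ, mul_div_assoc', mul_comm (∏ _ ∈ _, _),
      mul_div_mul_left _ _ hdeath0]
    ring

theorem abs_sub_le_pbdDeath_sub_of_lt (hβ : 0 < β)
    (hf : ∀ x y : ℕ, |f x - f y| ≤ |(x : ℝ) - (y : ℝ)|) (h : i < N) :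
    |f N - f i| ≤ 1 / (β + N - 1) * (pbdDeath β N - pbdDeath β i) := by
  have hN : (1 : ℝ) ≤ N := by exact_mod_cast Nat.one_le_of_lt h
  refine (hf N i).trans ?_
  rw [abs_of_nonneg (sub_nonneg.2 (Nat.cast_le.2 h.le)), one_div_mul_eq_div,
    le_div_iff₀ (by linarith)]
  exact mul_le_pbdDeath_sub_of_le h.le

theorem abs_sub_le_pbdDeath_sub_of_gt (hβ : 0 < β)
    (hf : ∀ x y : ℕ, |f x - f y| ≤ |(x : ℝ) - (y : ℝ)|) (h : N < i) :
    |f i - f N| ≤ 1 / (β + 2 * N) * (pbdDeath β i - pbdDeath β N) := by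
  refine (hf i N).trans ?_
  rw [abs_of_nonneg (sub_nonneg.2 (Nat.cast_le.2 h.le)), one_div_mul_eq_div,
    le_div_iff₀ (by positivity)]
  exact mul_le_pbdDeath_sub_of_lt h

theorem add_mul_deviationRatio_pbdDeath_le_min (hα : 0 < α) (hβ : 0 < β) (hN : N ≠ 0) :
    (1 / (β + N - 1) + 1 / (β + 2 * N)) *
        deviationRatio α (pbdDeath β N) (pbdDeath β (N + 1) - pbdDeath β N) ≤
      min (1 / (β + 1) + (α + 2) / (α * (α + 2) + 2 * β * (α + β + 1)))
        (1 / √α + 1 / α) := by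
  rw [pbdDeath_succ_sub, pbdDeath_eq_mul]
  obtain rfl | hN2 : N = 1 ∨ 2 ≤ N := by omega
  · rw [Nat.cast_one, mul_one, one_mul, add_sub_cancel_right]
    exact le_min (add_mul_deviationRatio_one_le hα hβ)
      (add_mul_deviationRatio_one_le_sqrt hα hβ)
  · replace hN2 : (2 : ℝ) ≤ N := by exact_mod_cast hN2
    have hsplit : β + 2 * (N : ℝ) = β + N - 1 + N + 1 := by ring
    rw [hsplit]
    apply le_min
    · have hfirst : 1 / (β + N - 1) ≤ 1 / (β + 1) :=
        one_div_le_one_div_of_le (by positivity) (by linarith)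
      have hsecond : 0 ≤ (α + 2) / (α * (α + 2) + 2 * β * (α + β + 1)) := by positivity
      linarith [add_mul_deviationRatio_le_one_div (x := β + N - 1) (d := β + N - 1 + N + 1)
        (N := N) hα (by linarith) (by linarith) (by linarith)]
    · have hinv : 0 ≤ 1 / α := by positivity
      linarith [add_mul_deviationRatio_le_one_div_sqrt (x := β + N - 1) hα hN2 (by linarith)]

end PolynomialBirthDeath

/-- bound on the first difference `|Δg_f n|` for the PBD(α;0,β,1) Stein solution. -/
theorem stmt_2
    (α β : ℝ) (hα : 0 < α) (hβ : 0 < β)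
    (C : ℝ) (hC : 0 < C) (π : ℕ → ℝ)
    (hπ : ∀ n : ℕ, π n =
      C * α ^ n / ∏ i ∈ Finset.range n, (β * ((i : ℝ) + 1) + ((i : ℝ) + 1) * (i : ℝ)))
    (hπ1 : ∑' n, π n = 1)
    (f : ℕ → ℝ) (hf : ∀ x y : ℕ, |f x - f y| ≤ |(x : ℝ) - (y : ℝ)|)
    (hfs : Summable fun n => |f n| * π n)
    (g : ℕ → ℝ) (hg0 : g 0 = g 1)
    (hg : ∀ n : ℕ, α * g (n + 1) - (β * (n : ℝ) + (n : ℝ) * ((n : ℝ) - 1)) * g n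
      = f n - ∑' k, f k * π k)
    :
    ∀ n : ℕ, |g (n + 1) - g n| ≤
      min (1 / (β + 1) + (α + 2) / (α * (α + 2) + 2 * β * (α + β + 1)))
        (1 / Real.sqrt α + 1 / α) := by
  intro n
  obtain rfl | hn := eq_or_ne n 0
  · rw [zero_add, hg0, sub_self, abs_zero]
    apply le_min <;> positivity
  have law := isImmigrationDeathLaw_pbd hα hβ hC hπ hπ1
  have hfπ : Summable fun k ↦ f k * π k := by
    refine Summable.of_abs (hfs.congr fun k ↦ ?_)
    rw [abs_mul, abs_of_pos (law.pos k)]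
  have hn1 : (1 : ℝ) ≤ n := by exact_mod_cast Nat.one_le_iff_ne_zero.2 hn
  have hslope : 0 ≤ 1 / (β + n - 1) := one_div_nonneg.2 (by linarith)
  refine le_trans ?_ (add_mul_deviationRatio_pbdDeath_le_min hα hβ hn)
  exact law.abs_stein_sub_le (monotone_pbdDeath hβ.le) hfπ.hasSum hg hn hslope (by positivity)
    (fun _ ↦ abs_sub_le_pbdDeath_sub_of_lt hβ hf) (fun _ ↦ abs_sub_le_pbdDeath_sub_of_gt hβ hf)
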